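/- For every integer a ≥ 3, let S ⊆ {0,1}^a be the set consisting of the all-zeros vector 0^a, the a − 2 weight-one vectors e_2, ..., e_{a-1}, the weight-two vector 1_{{1,3}}, and the a − 3 weight-two vectors 1_{{i,i+1}} for i ∈ {3, ..., a−1}; thus |S| = 2a − 3. Then there exists a path v_1, ..., v_n in {0,1}^a with n = 2^a − 2a + 3, pairwise distinct vertices, v_1 = e_1, v_n = e_a, consecutive vertices differing in exactly one coordinate, all interior vertices of weight at least 2, and whose set of visited vertices is exactly the complement {0,1}^a \ S. -/

import Mathlib

/-- The weight of a hypercube vertex: its number of 1-coordinates. -/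
def weight {a : ℕ} (v : Fin a → Bool) : ℕ :=
  (Finset.univ.filter (fun j => v j = true)).card

/-- Two hypercube vertices are adjacent if they differ in exactly one coordinate. -/
def hammingAdj {a : ℕ} (u v : Fin a → Bool) : Prop :=
  (Finset.univ.filter (fun j => u j ≠ v j)).card = 1

/-- `unitVec a i` is the vertex `e_i` that is `1` exactly in the (1-based) coordinate `i`. -/
def unitVec (a i : ℕ) : Fin a → Bool := fun j => decide (j.val + 1 = i)

/-- `pairVec a i k` is the vertex `1_{{i,k}}` that is `1` exactly in the (1-based)
coordinates `i` and `k`. -/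
def pairVec (a i k : ℕ) : Fin a → Bool := fun j => decide (j.val + 1 = i ∨ j.val + 1 = k)

/-- The missed set `S`: the all-zeros vector, the weight-one vectors `e_2, …, e_(a-1)`,
the weight-two vector `1_{{1,3}}`, and the weight-two vectors `1_{{i,i+1}}` for
`3 ≤ i ≤ a-1`. -/
def missedSet (a : ℕ) : Set (Fin a → Bool) :=
  {u | u = (fun _ => false) ∨
       (∃ i, 2 ≤ i ∧ i ≤ a - 1 ∧ u = unitVec a i) ∨
       u = pairVec a 1 3 ∨
       (∃ i, 3 ≤ i ∧ i ≤ a - 1 ∧ u = pairVec a i (i + 1))}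

/-- adjacency of finite sets: they differ in exactly one element -/
def sAdj (s t : Finset ℕ) : Prop :=
  ∃ i, (i ∉ s ∧ t = insert i s) ∨ (i ∉ t ∧ s = insert i t)

/-- Hamiltonian path of the cube on `k+2` coordinates with the empty set removed -/
def mPath : ℕ → List (Finset ℕ)
  | 0 => [{1}, {0, 1}, {0}]
  | k + 1 => mPath k ++ ((∅ :: mPath k).map (insert (k + 2))).reverse

/-- the flag path (without its last vertex) on `k+3` coordinates -/
def dPath : ℕ → List (Finset ℕ)
  | 0 => [{0}, {0, 1}, {0, 1, 2}, {1, 2}]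
  | k + 1 => dPath k ++ ((mPath k).map (fun s => insert (k + 3) (insert (k + 2) s)) ++
      (mPath k).reverse.map (insert (k + 3)))

/-- last vertex of `mPath` -/
def tip : ℕ → ℕ
  | 0 => 0
  | k + 1 => k + 2

theorem sAdj_symm {s t : Finset ℕ} (h : sAdj s t) : sAdj t s := by
  obtain ⟨i, h | h⟩ := h
  · exact ⟨i, Or.inr h⟩
  · exact ⟨i, Or.inl h⟩

theorem sAdj_insert {s t : Finset ℕ} (d : ℕ) (hs : d ∉ s) (ht : d ∉ t) (h : sAdj s t) :
    sAdj (insert d s) (insert d t) := by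
  obtain ⟨i, ⟨h1, rfl⟩ | ⟨h1, rfl⟩⟩ := h
  · refine ⟨i, Or.inl ⟨?_, Finset.insert_comm _ _ _⟩⟩
    simp at ht ⊢; exact ⟨fun h => ht.1 h.symm, h1⟩
  · refine ⟨i, Or.inr ⟨?_, Finset.insert_comm _ _ _⟩⟩
    simp at hs ⊢; exact ⟨fun h => hs.1 h.symm, h1⟩

theorem chain_insert (l : List (Finset ℕ)) (d : ℕ) (hl : ∀ s ∈ l, d ∉ s)
    (h : l.IsChain sAdj) : (l.map (insert d)).IsChain sAdj := by
  induction l with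
  | nil => simp
  | cons x l ih =>
    cases l with
    | nil => simp
    | cons y l =>
      simp only [List.map_cons, List.isChain_cons_cons] at h ih ⊢
      exact ⟨sAdj_insert d (hl _ (by simp)) (hl _ (by simp)) h.1,
        ih (fun s hs => hl s (by simp at hs ⊢; tauto)) h.2⟩

theorem chain_rev (l : List (Finset ℕ)) (h : l.IsChain sAdj) : l.reverse.IsChain sAdj := by
  rw [List.isChain_reverse]
  exact h.imp (fun _ _ h => sAdj_symm h)

theorem nodup_insert (l : List (Finset ℕ)) (d : ℕ) (hl : ∀ s ∈ l, d ∉ s)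
    (h : l.Nodup) : (l.map (insert d)).Nodup := by
  refine h.map_on ?_
  intro x hx y hy hxy
  rw [← Finset.erase_insert (hl x hx), ← Finset.erase_insert (hl y hy), hxy]

/-- split a subset of `range (n+1)` -/
theorem split_sub (n : ℕ) (s : Finset ℕ) (h : s ⊆ Finset.range (n + 1)) :
    s ⊆ Finset.range n ∨ ∃ t, t ⊆ Finset.range n ∧ s = insert n t := by
  by_cases hn : n ∈ s
  · right
    refine ⟨s.erase n, ?_, (Finset.insert_erase hn).symm⟩
    intro x hx
    have := h (Finset.mem_of_mem_erase hx)
    have h2 := Finset.ne_of_mem_erase hx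
    simp at this ⊢; omega
  · left
    intro x hx
    have := h hx
    have h2 : x ≠ n := fun h => hn (h ▸ hx)
    simp at this ⊢; omega

theorem notMem_of_sub {n d : ℕ} {s : Finset ℕ} (h : s ⊆ Finset.range n) (hd : n ≤ d) : d ∉ s := by
  intro h1
  have := h h1
  simp at this; omega

theorem sub_up {n d : ℕ} {s : Finset ℕ} (h : s ⊆ Finset.range n) (hd : n ≤ d) :
    s ⊆ Finset.range d := h.trans (Finset.range_mono hd)

theorem insert_sub_up {n d i : ℕ} {s : Finset ℕ} (h : s ⊆ Finset.range n) (hd : n ≤ d)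
    (hi : i < d) : insert i s ⊆ Finset.range d := by
  intro x hx
  rcases Finset.mem_insert.1 hx with rfl | hx
  · simpa using hi
  · exact sub_up h hd hx

theorem mPath_mem (k : ℕ) (s : Finset ℕ) :
    s ∈ mPath k ↔ s ⊆ Finset.range (k + 2) ∧ s ≠ ∅ := by
  induction k generalizing s with
  | zero =>
    have : ∀ s ∈ (Finset.range 2).powerset, (s ∈ mPath 0 ↔ s ≠ ∅) := by decide
    constructor
    · intro h
      have h2 : ∀ s ∈ mPath 0, s ⊆ Finset.range 2 ∧ s ≠ ∅ := by decide
      exact h2 s h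
    · rintro ⟨h1, h2⟩
      exact (this s (by simpa using h1)).2 h2
  | succ k ih =>
    simp only [mPath, List.mem_append, List.mem_reverse, List.mem_map, List.mem_cons, ih]
    constructor
    · rintro (⟨h, h2⟩ | ⟨t, rfl | ⟨h, h2⟩, rfl⟩)
      · exact ⟨sub_up h (by omega), h2⟩
      · exact ⟨by simp, by simp⟩
      · exact ⟨insert_sub_up h (by omega) (by omega), by simp⟩
    · rintro ⟨h, h2⟩
      rcases split_sub _ _ h with h | ⟨t, h3, rfl⟩
      · exact Or.inl ⟨h, h2⟩
      · right
        by_cases ht : t = ∅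
        · exact ⟨t, Or.inl ht, rfl⟩
        · exact ⟨t, Or.inr ⟨h3, ht⟩, rfl⟩

theorem gPath_sub (k : ℕ) (s : Finset ℕ) (h : s ∈ ∅ :: mPath k) : s ⊆ Finset.range (k + 2) := by
  rcases List.mem_cons.1 h with rfl | h
  · simp
  · exact ((mPath_mem k s).1 h).1

theorem mPath_head (k : ℕ) : (mPath k).head? = some {1} := by
  induction k with
  | zero => rfl
  | succ k ih => simp [mPath, ih]

theorem mPath_last (k : ℕ) : (mPath k).getLast? = some {tip k} := by
  induction k with
  | zero => rfl
  | succ k ih => simp [mPath, tip]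

theorem gPath_last (k : ℕ) : (∅ :: mPath k).getLast? = some {tip k} := by
  simp [List.getLast?_cons, mPath_last]

theorem mPath_nodup (k : ℕ) : (mPath k).Nodup := by
  induction k with
  | zero => decide
  | succ k ih =>
    rw [mPath, List.nodup_append']
    refine ⟨ih, ?_, ?_⟩
    · rw [List.nodup_reverse]
      apply nodup_insert
      · intro s hs; exact notMem_of_sub (gPath_sub k s hs) le_rfl
      · refine List.nodup_cons.2 ⟨?_, ih⟩
        rw [mPath_mem]; simp
    · intro s hs ht
      simp only [List.mem_reverse, List.mem_map] at ht
      obtain ⟨t, -, rfl⟩ := ht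
      exact notMem_of_sub ((mPath_mem _ _).1 hs).1 le_rfl (Finset.mem_insert_self _ _)

theorem tip_lt (k : ℕ) : tip k < k + 2 := by
  cases k <;> simp [tip]

theorem gPath_chain_of (k : ℕ) (h : (mPath k).IsChain sAdj) : (∅ :: mPath k).IsChain sAdj := by
  rw [List.isChain_cons]
  refine ⟨?_, h⟩
  intro y hy
  rw [mPath_head] at hy
  simp at hy
  subst hy
  exact ⟨1, Or.inl (by simp)⟩

theorem mPath_chain (k : ℕ) : (mPath k).IsChain sAdj := by
  induction k with
  | zero =>
    simp only [mPath, List.isChain_cons_cons, List.isChain_singleton, and_true]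
    exact ⟨⟨0, Or.inl (by decide)⟩, ⟨1, Or.inr (by decide)⟩⟩
  | succ k ih =>
    rw [mPath, List.isChain_append]
    refine ⟨ih, ?_, ?_⟩
    · apply chain_rev
      apply chain_insert
      · intro s hs; exact notMem_of_sub (gPath_sub k s hs) le_rfl
      · exact gPath_chain_of k ih
    · intro x hx y hy
      rw [mPath_last] at hx
      rw [List.head?_reverse, List.getLast?_map, gPath_last] at hy
      simp at hx hy
      subst hx hy
      have := tip_lt k
      exact ⟨k + 2, Or.inl ⟨by simp; omega, rfl⟩⟩

theorem mPath_length (k : ℕ) : (mPath k).length + 1 = 2 ^ (k + 2) := by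
  induction k with
  | zero => rfl
  | succ k ih => simp [mPath]; rw [pow_succ]; omega

/-- the missed set in terms of finite sets, `k+3` coordinates, 0-based -/
def fMissed (k : ℕ) (s : Finset ℕ) : Prop :=
  s = ∅ ∨ (∃ i, 1 ≤ i ∧ i ≤ k + 1 ∧ s = {i}) ∨ s = {0, 2} ∨
    (∃ i, 2 ≤ i ∧ i ≤ k + 1 ∧ s = {i, i + 1})

theorem dPath_mem (k : ℕ) (s : Finset ℕ) :
    s ∈ dPath k ↔ s ⊆ Finset.range (k + 3) ∧ ¬ fMissed k s ∧ s ≠ {k + 2} := by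
  induction k generalizing s with
  | zero =>
    have e : ∀ s, fMissed 0 s ↔ (s = ∅ ∨ s = {1} ∨ s = {0, 2}) := by
      intro s
      constructor
      · rintro (h | ⟨i, h1, h2, h⟩ | h | ⟨i, h1, h2, h⟩)
        · exact Or.inl h
        · obtain rfl : i = 1 := by omega
          exact Or.inr (Or.inl h)
        · exact Or.inr (Or.inr h)
        · omega
      · rintro (h | h | h)
        · exact Or.inl h
        · exact Or.inr (Or.inl ⟨1, le_rfl, le_rfl, h⟩)
        · exact Or.inr (Or.inr (Or.inl h))
    rw [e]
    have : ∀ s ∈ (Finset.range 3).powerset,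
      (s ∈ dPath 0 ↔ ¬ (s = ∅ ∨ s = {1} ∨ s = {0, 2}) ∧ s ≠ {2}) := by decide
    constructor
    · intro h
      have h2 : ∀ s ∈ dPath 0, s ⊆ Finset.range 3 := by decide
      exact ⟨h2 s h, (this s (by simpa using h2 s h)).1 h⟩
    · rintro ⟨h1, h2⟩
      exact (this s (by simpa using h1)).2 h2
  | succ k ih =>
    simp only [dPath, List.mem_append, List.mem_reverse, List.mem_map, ih, mPath_mem]
    by_cases hk : k + 3 ∈ s
    · -- new coordinate present
      have hmiss : fMissed (k + 1) s ↔ s = {k + 2, k + 3} := by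
        constructor
        · rintro (rfl | ⟨i, h1, h2, rfl⟩ | rfl | ⟨i, h1, h2, rfl⟩)
          · simp at hk
          · simp at hk; omega
          · simp at hk
          · simp at hk
            obtain rfl : i = k + 2 := by omega
            rfl
        · intro h
          exact Or.inr (Or.inr (Or.inr ⟨k + 2, by omega, by omega, h⟩))
      rw [hmiss]
      constructor
      · rintro (⟨h, -⟩ | ⟨t, ⟨h, h2⟩, rfl⟩ | ⟨t, ⟨h, h2⟩, rfl⟩)
        · exact absurd hk (notMem_of_sub h le_rfl)
        · obtain ⟨x, hx⟩ := Finset.nonempty_iff_ne_empty.2 h2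
          have hx2 := h hx
          simp at hx2
          refine ⟨insert_sub_up (insert_sub_up h (d := k + 3) (by omega) (by omega))
            (by omega) (by omega), ?_, ?_⟩
          · intro e
            have : x ∈ ({k + 2, k + 3} : Finset ℕ) := by rw [← e]; simp [hx]
            simp at this; omega
          · intro e
            have : x ∈ ({k + 1 + 2} : Finset ℕ) := by rw [← e]; simp [hx]
            simp at this; omega
        · obtain ⟨x, hx⟩ := Finset.nonempty_iff_ne_empty.2 h2
          have hx2 := h hx
          simp at hx2
          refine ⟨insert_sub_up h (by omega) (by omega), ?_, ?_⟩
          · intro e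
            have : x ∈ ({k + 2, k + 3} : Finset ℕ) := by rw [← e]; simp [hx]
            simp at this; omega
          · intro e
            have : x ∈ ({k + 1 + 2} : Finset ℕ) := by rw [← e]; simp [hx]
            simp at this; omega
      · rintro ⟨h, h2, h3⟩
        right
        rcases split_sub (k + 3) _ h with h | ⟨t, h4, rfl⟩
        · exact absurd hk (notMem_of_sub h le_rfl)
        · rcases split_sub (k + 2) _ h4 with h | ⟨u, h5, rfl⟩
          · right
            refine ⟨t, ⟨h, ?_⟩, rfl⟩
            rintro rfl
            exact h3 rfl
          · left
            refine ⟨u, ⟨h5, ?_⟩, rfl⟩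
            rintro rfl
            exact h2 (Finset.pair_comm _ _)
    · have hmiss : fMissed (k + 1) s ↔ fMissed k s ∨ s = {k + 2} := by
        constructor
        · rintro (h | ⟨i, h1, h2, h⟩ | h | ⟨i, h1, h2, h⟩)
          · exact Or.inl (Or.inl h)
          · by_cases hi : i = k + 2
            · subst hi; exact Or.inr h
            · exact Or.inl (Or.inr (Or.inl ⟨i, h1, by omega, h⟩))
          · exact Or.inl (Or.inr (Or.inr (Or.inl h)))
          · by_cases hi : i = k + 2
            · subst hi; exact absurd (by rw [h]; simp) hk
            · exact Or.inl (Or.inr (Or.inr (Or.inr ⟨i, h1, by omega, h⟩)))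
        · rintro ((h | ⟨i, h1, h2, h⟩ | h | ⟨i, h1, h2, h⟩) | h)
          · exact Or.inl h
          · exact Or.inr (Or.inl ⟨i, h1, by omega, h⟩)
          · exact Or.inr (Or.inr (Or.inl h))
          · exact Or.inr (Or.inr (Or.inr ⟨i, h1, by omega, h⟩))
          · exact Or.inr (Or.inl ⟨k + 2, by omega, by omega, h⟩)
      rw [hmiss]
      constructor
      · rintro (⟨h, h2, h3⟩ | ⟨t, ⟨h, h2⟩, rfl⟩ | ⟨t, ⟨h, h2⟩, rfl⟩)
        · refine ⟨sub_up h (by omega), by tauto, ?_⟩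
          rintro rfl
          simp at hk
        · simp at hk
        · simp at hk
      · rintro ⟨h, h2, h3⟩
        left
        rcases split_sub (k + 3) _ h with h | ⟨t, h, rfl⟩
        · exact ⟨h, by tauto, by tauto⟩
        · simp at hk

theorem dPath_head (k : ℕ) : (dPath k).head? = some {0} := by
  induction k with
  | zero => rfl
  | succ k ih => simp [dPath, ih]

theorem dPath_last (k : ℕ) : (dPath k).getLast? = some {1, k + 2} := by
  cases k with
  | zero => rfl
  | succ k =>
    rw [dPath, List.getLast?_append, List.getLast?_append, List.getLast?_map,
      List.getLast?_reverse, mPath_head]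
    simp [Finset.pair_comm]

theorem dPath_length (k : ℕ) : (dPath k).length + 1 = 2 ^ (k + 3) - 2 * (k + 3) + 3 ∧
    2 * (k + 3) ≤ 2 ^ (k + 3) := by
  induction k with
  | zero => exact ⟨rfl, by norm_num⟩
  | succ k ih =>
    have := mPath_length k
    have e : 2 ^ (k + 3) = 2 * 2 ^ (k + 2) := by ring
    have e2 : 2 ^ (k + 1 + 3) = 2 * 2 ^ (k + 3) := by ring
    simp only [dPath, List.length_append, List.length_map, List.length_reverse]
    omega

theorem mm_eq (k : ℕ) : (mPath k).map (fun s => insert (k + 3) (insert (k + 2) s)) =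
    ((mPath k).map (insert (k + 2))).map (insert (k + 3)) := by
  simp [List.map_map, Function.comp_def]

theorem m1_notMem (k : ℕ) : ∀ s ∈ mPath k, k + 2 ∉ s := fun s hs =>
  notMem_of_sub ((mPath_mem k s).1 hs).1 le_rfl

theorem m2_notMem (k : ℕ) : ∀ s ∈ mPath k, k + 3 ∉ s := fun s hs =>
  notMem_of_sub ((mPath_mem k s).1 hs).1 (by omega)

theorem m3_notMem (k : ℕ) : ∀ s ∈ (mPath k).map (insert (k + 2)), k + 3 ∉ s := by
  intro s hs
  obtain ⟨t, ht, rfl⟩ := List.mem_map.1 hs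
  have := m2_notMem k t ht
  simp [this]

theorem dPath_nodup (k : ℕ) : (dPath k).Nodup := by
  induction k with
  | zero => decide
  | succ k ih =>
    rw [dPath, mm_eq, ← List.map_append, List.nodup_append']
    have hn : ∀ s ∈ (mPath k).map (insert (k + 2)) ++ (mPath k).reverse, k + 3 ∉ s := by
      intro s hs
      rcases List.mem_append.1 hs with hs | hs
      · exact m3_notMem k s hs
      · exact m2_notMem k s (List.mem_reverse.1 hs)
    refine ⟨ih, nodup_insert _ _ hn ?_, ?_⟩
    · rw [List.nodup_append']
      refine ⟨nodup_insert _ _ (m1_notMem k) (mPath_nodup k),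
        List.nodup_reverse.2 (mPath_nodup k), ?_⟩
      intro s hs ht
      obtain ⟨t, -, rfl⟩ := List.mem_map.1 hs
      exact m1_notMem k _ (List.mem_reverse.1 ht) (Finset.mem_insert_self _ _)
    · intro s hs ht
      obtain ⟨t, -, rfl⟩ := List.mem_map.1 ht
      exact notMem_of_sub ((dPath_mem k _).1 hs).1 le_rfl (Finset.mem_insert_self _ _)

theorem dPath_chain (k : ℕ) : (dPath k).IsChain sAdj := by
  induction k with
  | zero =>
    simp only [dPath, List.isChain_cons_cons, List.isChain_singleton, and_true]
    exact ⟨⟨1, Or.inl (by decide)⟩, ⟨2, Or.inl (by decide)⟩, ⟨0, Or.inr (by decide)⟩⟩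
  | succ k ih =>
    rw [dPath, mm_eq, ← List.map_append, List.isChain_append]
    have hn : ∀ s ∈ (mPath k).map (insert (k + 2)) ++ (mPath k).reverse, k + 3 ∉ s := by
      intro s hs
      rcases List.mem_append.1 hs with hs | hs
      · exact m3_notMem k s hs
      · exact m2_notMem k s (List.mem_reverse.1 hs)
    refine ⟨ih, chain_insert _ _ hn ?_, ?_⟩
    · rw [List.isChain_append]
      refine ⟨chain_insert _ _ (m1_notMem k) (mPath_chain k), chain_rev _ (mPath_chain k), ?_⟩
      intro x hx y hy
      rw [List.getLast?_map, mPath_last] at hx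
      rw [List.head?_reverse, mPath_last] at hy
      simp at hx hy
      subst hx hy
      have := tip_lt k
      exact ⟨k + 2, Or.inr ⟨by simp; omega, rfl⟩⟩
    · intro x hx y hy
      rw [dPath_last] at hx
      rw [List.head?_map, List.head?_append, List.head?_map, mPath_head] at hy
      simp at hx hy
      subst hx hy
      exact ⟨k + 3, Or.inl ⟨by simp, by rw [Finset.pair_comm]⟩⟩

/-- the full path on `k+3` coordinates -/
def pPath (k : ℕ) : List (Finset ℕ) := dPath k ++ [{k + 2}]

theorem pPath_chain (k : ℕ) : (pPath k).IsChain sAdj := by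
  rw [pPath, List.isChain_append]
  refine ⟨dPath_chain k, by simp, ?_⟩
  intro x hx y hy
  rw [dPath_last] at hx
  simp at hx hy
  subst hx hy
  exact ⟨1, Or.inr ⟨by simp, rfl⟩⟩

theorem pPath_nodup (k : ℕ) : (pPath k).Nodup := by
  rw [pPath, List.nodup_append']
  refine ⟨dPath_nodup k, by simp, ?_⟩
  intro s hs ht
  simp at ht
  exact ((dPath_mem k s).1 hs).2.2 ht

theorem last_not_missed (k : ℕ) : ¬ fMissed k {k + 2} := by
  rintro (h | ⟨i, h1, h2, h⟩ | h | ⟨i, h1, h2, h⟩)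
  · simp at h
  · simp at h; omega
  · have := congrArg Finset.card h
    simp at this
  · have := congrArg Finset.card h
    simp at this

theorem pPath_mem (k : ℕ) (s : Finset ℕ) :
    s ∈ pPath k ↔ s ⊆ Finset.range (k + 3) ∧ ¬ fMissed k s := by
  simp only [pPath, List.mem_append, dPath_mem, List.mem_singleton]
  constructor
  · rintro (h | rfl)
    · exact ⟨h.1, h.2.1⟩
    · exact ⟨by simp, last_not_missed k⟩
  · rintro ⟨h1, h2⟩
    by_cases h : s = {k + 2}
    · exact Or.inr h
    · exact Or.inl ⟨h1, h2, h⟩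

/-- indicator vector -/
def toVec (a : ℕ) (s : Finset ℕ) : Fin a → Bool := fun j => decide (j.val ∈ s)

theorem toVec_inj {a : ℕ} {s t : Finset ℕ} (hs : s ⊆ Finset.range a) (ht : t ⊆ Finset.range a)
    (h : toVec a s = toVec a t) : s = t := by
  ext x
  by_cases hx : x < a
  · have := congrFun h ⟨x, hx⟩
    simpa [toVec] using this
  · exact iff_of_false (notMem_of_sub hs (by omega)) (notMem_of_sub ht (by omega))

theorem toVec_surj {a : ℕ} (u : Fin a → Bool) : ∃ s, s ⊆ Finset.range a ∧ toVec a s = u := by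
  refine ⟨(Finset.univ.filter (fun j => u j = true)).map Fin.valEmbedding, ?_, ?_⟩
  · intro x hx
    obtain ⟨j, -, rfl⟩ := Finset.mem_map.1 hx
    simp
  · ext j
    simp [toVec, ← Fin.ext_iff]

theorem toVec_adj {a : ℕ} {s t : Finset ℕ} (hs : s ⊆ Finset.range a) (ht : t ⊆ Finset.range a)
    (h : sAdj s t) : hammingAdj (toVec a s) (toVec a t) := by
  unfold hammingAdj
  rw [Finset.card_eq_one]
  obtain ⟨i, ⟨h1, rfl⟩ | ⟨h1, rfl⟩⟩ := h
  · have hi := ht (Finset.mem_insert_self _ _)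
    refine ⟨⟨i, by simpa using hi⟩, ?_⟩
    ext j
    simp only [toVec, Finset.mem_filter, Finset.mem_univ, true_and, Finset.mem_singleton,
      Finset.mem_insert, ne_eq, decide_eq_decide, Fin.ext_iff]
    by_cases hj : j.val = i
    · simp [hj, h1]
    · simp [hj]
  · have hi := hs (Finset.mem_insert_self _ _)
    refine ⟨⟨i, by simpa using hi⟩, ?_⟩
    ext j
    simp only [toVec, Finset.mem_filter, Finset.mem_univ, true_and, Finset.mem_singleton,
      Finset.mem_insert, ne_eq, decide_eq_decide, Fin.ext_iff]
    by_cases hj : j.val = i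
    · simp [hj, h1]
    · simp [hj]

theorem toVec_weight {a : ℕ} {s : Finset ℕ} (hs : s ⊆ Finset.range a) :
    weight (toVec a s) = s.card := by
  unfold weight
  rw [← Finset.card_map Fin.valEmbedding]
  congr 1
  ext x
  simp only [toVec, Finset.mem_map, Finset.mem_filter, Finset.mem_univ, true_and,
    decide_eq_true_eq, Fin.valEmbedding_apply]
  constructor
  · rintro ⟨j, h, rfl⟩; exact h
  · intro h
    exact ⟨⟨x, by simpa using hs h⟩, h, rfl⟩

theorem toVec_unit (a i : ℕ) : toVec a {i} = unitVec a (i + 1) := by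
  ext j; simp [toVec, unitVec]

theorem toVec_pair (a i l : ℕ) : toVec a {i, l} = pairVec a (i + 1) (l + 1) := by
  ext j; simp [toVec, pairVec]

theorem missed_iff (k : ℕ) (s : Finset ℕ) (hs : s ⊆ Finset.range (k + 3)) :
    toVec (k + 3) s ∈ missedSet (k + 3) ↔ fMissed k s := by
  have e0 : (fun _ => false : Fin (k + 3) → Bool) = toVec (k + 3) ∅ := by
    ext j; simp [toVec]
  have hp : ∀ i l, i < k + 3 → l < k + 3 → ({i, l} : Finset ℕ) ⊆ Finset.range (k + 3) := by
    intro i l hi hl x hx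
    simp at hx ⊢; omega
  simp only [missedSet, Set.mem_ofPred_eq]
  constructor
  · rintro (h | ⟨i, h1, h2, h⟩ | h | ⟨i, h1, h2, h⟩)
    · rw [e0] at h
      exact Or.inl (toVec_inj hs (by simp) h)
    · obtain ⟨i, rfl⟩ : ∃ m, i = m + 1 := ⟨i - 1, by omega⟩
      rw [← toVec_unit] at h
      exact Or.inr (Or.inl ⟨i, by omega, by omega, toVec_inj hs (by simp; omega) h⟩)
    · have := toVec_pair (k + 3) 0 2
      rw [← this] at h
      exact Or.inr (Or.inr (Or.inl (toVec_inj hs (hp _ _ (by omega) (by omega)) h)))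
    · obtain ⟨i, rfl⟩ : ∃ m, i = m + 1 := ⟨i - 1, by omega⟩
      rw [← toVec_pair] at h
      exact Or.inr (Or.inr (Or.inr ⟨i, by omega, by omega,
        toVec_inj hs (hp _ _ (by omega) (by omega)) h⟩))
  · rintro (rfl | ⟨i, h1, h2, rfl⟩ | rfl | ⟨i, h1, h2, rfl⟩)
    · exact Or.inl e0.symm
    · exact Or.inr (Or.inl ⟨i + 1, by omega, by omega, toVec_unit _ _⟩)
    · exact Or.inr (Or.inr (Or.inl (toVec_pair _ _ _)))
    · exact Or.inr (Or.inr (Or.inr ⟨i + 1, by omega, by omega, toVec_pair _ _ _⟩))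

theorem flag_sequence_missed_set (a : ℕ) (ha : 3 ≤ a) :
    (missedSet a).ncard = 2 * a - 3 ∧
    ∃ (n : ℕ) (v : ℕ → (Fin a → Bool)),
      n = 2 ^ a - 2 * a + 3 ∧
      (∀ i j, i < n → j < n → v i = v j → i = j) ∧
      v 0 = unitVec a 1 ∧
      v (n - 1) = unitVec a a ∧
      (∀ i, i + 1 < n → hammingAdj (v i) (v (i + 1))) ∧
      (∀ i, 0 < i → i + 1 < n → 2 ≤ weight (v i)) ∧
      (∀ u : Fin a → Bool, (∃ i, i < n ∧ v i = u) ↔ u ∉ missedSet a) := by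
  obtain ⟨k, rfl⟩ : ∃ k, a = k + 3 := ⟨a - 3, by omega⟩
  obtain ⟨hlen, hle⟩ := dPath_length k
  have hlen' : (pPath k).length = (dPath k).length + 1 := by simp [pPath]
  obtain ⟨v, hv⟩ : ∃ v : ℕ → (Fin (k + 3) → Bool),
      ∀ i, v i = toVec (k + 3) ((pPath k).getD i ∅) := ⟨_, fun _ => rfl⟩
  have hv' : ∀ i (h : i < (pPath k).length), v i = toVec (k + 3) ((pPath k)[i]) := by
    intro i h
    rw [hv, List.getD_eq_getElem _ _ h]
  have hmem : ∀ i (h : i < (pPath k).length), (pPath k)[i] ⊆ Finset.range (k + 3) ∧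
      ¬ fMissed k ((pPath k)[i]) := fun i h => (pPath_mem k _).1 (List.getElem_mem h)
  have hinj : ∀ i j, i < (pPath k).length → j < (pPath k).length → v i = v j → i = j := by
    intro i j hi hj h
    rw [hv' i hi, hv' j hj] at h
    exact (pPath_nodup k).getElem_inj_iff.1 (toVec_inj (hmem i hi).1 (hmem j hj).1 h)
  have hcov : ∀ u : Fin (k + 3) → Bool,
      (∃ i, i < (pPath k).length ∧ v i = u) ↔ u ∉ missedSet (k + 3) := by
    intro u
    constructor
    · rintro ⟨i, hi, rfl⟩
      rw [hv' i hi, missed_iff k _ (hmem i hi).1]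
      exact (hmem i hi).2
    · intro hu
      obtain ⟨s, hs, rfl⟩ := toVec_surj u
      rw [missed_iff k _ hs] at hu
      obtain ⟨i, hi, h⟩ := List.getElem_of_mem ((pPath_mem k s).2 ⟨hs, hu⟩)
      exact ⟨i, hi, by rw [hv' i hi, h]⟩
  have h0 : (pPath k)[0]'(by omega) = {0} := by
    have : (pPath k).head? = some {0} := by simp [pPath, dPath_head]
    rw [List.head?_eq_getElem?, List.getElem?_eq_getElem (by omega)] at this
    simpa using this
  have hl : (pPath k)[(pPath k).length - 1]'(by omega) = {k + 2} := by
    simp [pPath]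
  refine ⟨?_, (pPath k).length, v, by omega, hinj, ?_, ?_, ?_, ?_, hcov⟩
  · have e : (missedSet (k + 3))ᶜ =
        (((Finset.range (pPath k).length).image v : Finset _) : Set (Fin (k + 3) → Bool)) := by
      ext u
      rw [Set.mem_compl_iff, ← hcov]
      simp
    have h1 := Set.ncard_add_ncard_compl (missedSet (k + 3))
    rw [e, Set.ncard_coe_finset, Finset.card_image_of_injOn, Finset.card_range] at h1
    · have h2 : Nat.card (Fin (k + 3) → Bool) = 2 ^ (k + 3) := by simp
      omega
    · intro i hi j hj h
      simp at hi hj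
      exact hinj i j hi hj h
  · rw [hv' 0 (by omega), h0, toVec_unit]
  · rw [hv' _ (by omega), hl, toVec_unit]
  · intro i hi
    rw [hv' i (by omega), hv' (i + 1) hi]
    exact toVec_adj (hmem _ _).1 (hmem _ _).1 (List.isChain_iff_getElem.1 (pPath_chain k) i hi)
  · intro i hi0 hi
    have hi' : i < (pPath k).length := by omega
    rw [hv' i hi', toVec_weight (hmem i hi').1]
    by_contra hlt
    have hc : (pPath k)[i].card = 0 ∨ (pPath k)[i].card = 1 := by omega
    rcases hc with hc | hc
    · exact (hmem i hi').2 (Or.inl (Finset.card_eq_zero.1 hc))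
    · obtain ⟨x, hx⟩ := Finset.card_eq_one.1 hc
      have hxr : x < k + 3 := by
        have := (hmem i hi').1
        rw [hx] at this
        simpa using this
      rcases Nat.eq_zero_or_pos x with rfl | hx0
      · have := (pPath_nodup k).getElem_inj_iff.1 (hx.trans h0.symm)
        omega
      · by_cases hxl : x = k + 2
        · subst hxl
          have := (pPath_nodup k).getElem_inj_iff.1 (hx.trans hl.symm)
          omega
        · exact (hmem i hi').2 (Or.inr (Or.inl ⟨x, hx0, by omega, hx⟩))
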